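/- arXiv:2006.05585 — 2 statements merged into one kernel-verified Lean document; each statement's English description precedes it below -/
import Mathlib

section
/- Let h, l > 0 and let R = [0,h] × [0,l] ⊂ ℝ². For every function v : ℝ² → ℝ that is continuously differentiable on a neighborhood of R, the trace of v² on the bottom edge satisfies ∫₀ʰ v(x,0)² dx ≤ (1/l)·‖v‖²_{L²(R)} + 2·‖v‖_{L²(R)}·‖∇v‖_{L²(R)}. -/
open MeasureTheory

lemma aux_cs {R : Set (ℝ × ℝ)} (hR : IsCompact R) (f g : ℝ × ℝ → ℝ)
    (hf : ContinuousOn f R) (hg : ContinuousOn g R) :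
    ∫ p in R, |f p| * |g p| ≤ Real.sqrt (∫ p in R, (f p)^2) * Real.sqrt (∫ p in R, (g p)^2) := by
  have hm := hR.measurableSet
  have key : ∀ u : ℝ × ℝ → ℝ, ContinuousOn u R → MemLp u (ENNReal.ofReal 2) (volume.restrict R) := by
    intro u hu
    have h2 : ENNReal.ofReal 2 = 2 := by norm_num
    rw [h2, memLp_two_iff_integrable_sq (hu.aestronglyMeasurable hm)]
    exact (hu.pow 2).integrableOn_compact hR
  have := integral_mul_norm_le_Lp_mul_Lq (μ := volume.restrict R) (f := f) (g := g)
    Real.HolderConjugate.two_two (key f hf) (key g hg)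
  simpa [Real.sqrt_eq_rpow] using this

lemma aux_1d (l : ℝ) (hl : 0 < l) (w w' : ℝ → ℝ)
    (hw : ∀ y ∈ Set.Icc 0 l, HasDerivAt w (w' y) y) (hw' : ContinuousOn w' (Set.Icc 0 l)) :
    (w 0)^2 ≤ ∫ y in Set.Icc 0 l, ((1/l) * (w y)^2 + 2 * (|w y| * |w' y|)) := by
  have hc : ContinuousOn w (Set.Icc 0 l) := fun y hy => (hw y hy).continuousAt.continuousWithinAt
  have hd : ∀ y ∈ Set.uIcc 0 l, HasDerivAt (fun y => (y/l - 1) * (w y)^2)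
      ((1/l) * (w y)^2 + (y/l - 1) * (2 * w y * w' y)) y := by
    intro y hy
    rw [Set.uIcc_of_le hl.le] at hy
    have := (((hasDerivAt_id y).div_const l).sub_const 1).mul ((hw y hy).pow 2)
    refine this.congr_deriv ?_
    simp
  have hi : ContinuousOn (fun y => (1/l) * (w y)^2 + (y/l - 1) * (2 * w y * w' y)) (Set.Icc 0 l) := by
    fun_prop
  have ftc := intervalIntegral.integral_eq_sub_of_hasDerivAt hd
    (by apply ContinuousOn.intervalIntegrable; rwa [Set.uIcc_of_le hl.le])
  rw [intervalIntegral.integral_of_le hl.le, ← integral_Icc_eq_integral_Ioc] at ftc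
  have e : (w 0)^2 = ∫ y in Set.Icc 0 l, ((1/l) * (w y)^2 + (y/l - 1) * (2 * w y * w' y)) := by
    rw [ftc, div_self hl.ne']; ring
  rw [e]
  apply setIntegral_mono_on (hi.integrableOn_compact isCompact_Icc) _ measurableSet_Icc
  · intro y hy
    have h0 : 0 ≤ y / l := div_nonneg hy.1 hl.le
    have h1 : y / l ≤ 1 := (div_le_one hl).2 hy.2
    have h3 : (y/l - 1) * (2 * w y * w' y) ≤ 2 * (|w y| * |w' y|) := by
      rw [← abs_mul]
      have a1 := neg_abs_le (w y * w' y)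
      have a3 := abs_nonneg (w y * w' y)
      nlinarith
    linarith
  · apply ContinuousOn.integrableOn_compact isCompact_Icc
    fun_prop

/-- Trace inequality on the bottom edge of the rectangle `R = [0,h] × [0,l]`:
`∫₀ʰ v(x,0)² dx ≤ (1/l)‖v‖²_{L²(R)} + 2‖v‖_{L²(R)}‖∇v‖_{L²(R)}` for every `v`
continuously differentiable on a neighborhood of `R`. -/
theorem stmt_1 (h l : ℝ) (hh : 0 < h) (hl : 0 < l)
    (v : ℝ × ℝ → ℝ)
    (hv : ∃ U : Set (ℝ × ℝ), IsOpen U ∧ Set.Icc 0 h ×ˢ Set.Icc 0 l ⊆ U ∧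
      ContDiffOn ℝ 1 v U) :
    (∫ x in Set.Icc 0 h, (v (x, 0)) ^ 2) ≤
      (1 / l) * (∫ p in Set.Icc 0 h ×ˢ Set.Icc 0 l, (v p) ^ 2) +
        2 * Real.sqrt (∫ p in Set.Icc 0 h ×ˢ Set.Icc 0 l, (v p) ^ 2) *
          Real.sqrt (∫ p in Set.Icc 0 h ×ˢ Set.Icc 0 l,
            ((fderiv ℝ v p (1, 0)) ^ 2 + (fderiv ℝ v p (0, 1)) ^ 2)) := by
  obtain ⟨U, hU, hRU, hv⟩ := hv
  have hR : IsCompact (Set.Icc 0 h ×ˢ Set.Icc 0 l) := isCompact_Icc.prod isCompact_Icc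
  have cv : ContinuousOn v (Set.Icc 0 h ×ˢ Set.Icc 0 l) := hv.continuousOn.mono hRU
  have cf := (hv.continuousOn_fderiv_of_isOpen hU le_rfl).mono hRU
  have c1 : ContinuousOn (fun p => fderiv ℝ v p (1, 0)) (Set.Icc 0 h ×ˢ Set.Icc 0 l) :=
    cf.clm_apply continuousOn_const
  have c2 : ContinuousOn (fun p => fderiv ℝ v p (0, 1)) (Set.Icc 0 h ×ˢ Set.Icc 0 l) :=
    cf.clm_apply continuousOn_const
  have iv : IntegrableOn (fun p => (1/l) * (v p)^2) (Set.Icc 0 h ×ˢ Set.Icc 0 l) :=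
    ContinuousOn.integrableOn_compact hR (by fun_prop)
  have im : IntegrableOn (fun p => 2 * (|v p| * |fderiv ℝ v p (0, 1)|))
      (Set.Icc 0 h ×ˢ Set.Icc 0 l) :=
    ContinuousOn.integrableOn_compact hR (by fun_prop)
  have iF : IntegrableOn (fun p => (1/l) * (v p)^2 + 2 * (|v p| * |fderiv ℝ v p (0, 1)|))
      (Set.Icc 0 h ×ˢ Set.Icc 0 l) := iv.add im
  have step1 : (∫ x in Set.Icc 0 h, (v (x, 0)) ^ 2) ≤
      ∫ p in Set.Icc 0 h ×ˢ Set.Icc 0 l,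
        ((1/l) * (v p)^2 + 2 * (|v p| * |fderiv ℝ v p (0, 1)|)) := by
    rw [Measure.volume_eq_prod, setIntegral_prod _ iF]
    apply setIntegral_mono_on _ _ measurableSet_Icc
    · intro x hx
      have := aux_1d l hl (fun y => v (x, y)) (fun y => fderiv ℝ v (x, y) (0, 1)) ?_ ?_
      · exact this
      · intro y hy
        have hm : (x, y) ∈ U := hRU ⟨hx, hy⟩
        have hd := ((hv.contDiffAt (hU.mem_nhds hm)).differentiableAt one_ne_zero).hasFDerivAt
        exact hd.comp_hasDerivAt y ((hasDerivAt_const y x).prodMk (hasDerivAt_id y))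
      · exact c2.comp (by fun_prop) (fun y hy => ⟨hx, hy⟩)
    · apply ContinuousOn.integrableOn_compact isCompact_Icc
      refine ContinuousOn.pow (cv.comp (by fun_prop) (fun x hx => ⟨hx, ?_⟩)) 2
      exact ⟨le_rfl, hl.le⟩
    · unfold IntegrableOn at iF
      rw [Measure.volume_eq_prod, ← Measure.prod_restrict] at iF
      exact iF.integral_prod_left
  have step2 := aux_cs hR v _ cv c2
  have step3 : Real.sqrt (∫ p in Set.Icc 0 h ×ˢ Set.Icc 0 l, (fderiv ℝ v p (0, 1)) ^ 2) ≤
      Real.sqrt (∫ p in Set.Icc 0 h ×ˢ Set.Icc 0 l,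
            ((fderiv ℝ v p (1, 0)) ^ 2 + (fderiv ℝ v p (0, 1)) ^ 2)) := by
    apply Real.sqrt_le_sqrt
    apply setIntegral_mono_on _ _ hR.measurableSet
    · intro p _
      nlinarith [sq_nonneg (fderiv ℝ v p (1, 0))]
    · exact ContinuousOn.integrableOn_compact hR (by fun_prop)
    · exact ContinuousOn.integrableOn_compact hR (by fun_prop)
  rw [integral_add iv im, integral_const_mul, integral_const_mul] at step1
  have step4 := mul_le_mul_of_nonneg_left step3
    (Real.sqrt_nonneg (∫ p in Set.Icc 0 h ×ˢ Set.Icc 0 l, (v p) ^ 2))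
  linarith
end

section
/- Let T = {(x,y) ∈ ℝ² : x ≥ 0, y ≥ 0, x + y ≤ 1} be the closed unit triangle and let b(x,y) := x·y·(1 − x − y) be its interior bubble function. For every natural number k there exists a constant C = C(k) > 0 such that for every real bivariate polynomial P of total degree at most k, ∫_T P(x,y)² dA ≤ C·∫_T b(x,y)·P(x,y)² dA. -/
open MeasureTheory

lemma aux_quad (n : ℕ) (A B : (Fin n → ℝ) →ₗ[ℝ] (Fin n → ℝ) →ₗ[ℝ] ℝ)
    (hB : ∀ x, x ≠ 0 → 0 < B x x) : ∃ C : ℝ, 0 < C ∧ ∀ x, A x x ≤ C * B x x := by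
  have hc : ∀ A : (Fin n → ℝ) →ₗ[ℝ] (Fin n → ℝ) →ₗ[ℝ] ℝ, Continuous fun x => A x x := by
    intro A
    have h1 : Continuous
        ((LinearMap.toContinuousLinearMap : ((Fin n → ℝ) →ₗ[ℝ] ℝ) ≃ₗ[ℝ] _).toLinearMap ∘ₗ A) :=
      LinearMap.continuous_of_finiteDimensional _
    exact h1.clm_apply continuous_id
  have hK : IsCompact (Metric.sphere (0 : Fin n → ℝ) 1) := isCompact_sphere _ _
  have hcont : ContinuousOn (fun x => A x x / B x x) (Metric.sphere (0 : Fin n → ℝ) 1) := by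
    refine (hc A).continuousOn.div (hc B).continuousOn ?_
    intro x hx
    refine (hB x ?_).ne'
    rintro rfl
    simp at hx
  obtain ⟨M, hM⟩ := hK.bddAbove_image hcont
  refine ⟨max M 1, by positivity, fun x => ?_⟩
  by_cases hx : x = 0
  · simp [hx]
  have hn : ‖x‖ ≠ 0 := norm_ne_zero_iff.mpr hx
  have h := hM ⟨‖x‖⁻¹ • x, by simp [norm_smul, hn], rfl⟩
  have hb := hB x hx
  simp only [map_smul, LinearMap.smul_apply, smul_eq_mul] at h
  have h2 : A x x / B x x ≤ M := by
    refine le_trans (le_of_eq ?_) h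
    field_simp
  rw [div_le_iff₀ hb] at h2
  exact h2.trans (mul_le_mul_of_nonneg_right (le_max_left _ _) hb.le)

def auxT : Set (ℝ × ℝ) := {p : ℝ × ℝ | 0 ≤ p.1 ∧ 0 ≤ p.2 ∧ p.1 + p.2 ≤ 1}

lemma auxT_closed : IsClosed auxT := by
  exact (isClosed_le continuous_const continuous_fst).inter
    ((isClosed_le continuous_const continuous_snd).inter
      (isClosed_le (continuous_fst.add continuous_snd) continuous_const))

lemma auxT_compact : IsCompact auxT := by
  refine (isCompact_Icc (a := ((0, 0) : ℝ × ℝ)) (b := (1, 1))).of_isClosed_subset auxT_closed ?_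
  rintro ⟨x, y⟩ ⟨h1, h2, h3⟩
  simp only at h1 h2 h3
  exact ⟨⟨h1, h2⟩, ⟨by simp only; linarith, by simp only; linarith⟩⟩

lemma aux_eval_cont (P : MvPolynomial (Fin 2) ℝ) :
    Continuous fun q : ℝ × ℝ => MvPolynomial.eval ![q.1, q.2] P := by
  refine (MvPolynomial.continuous_eval P).comp ?_
  refine continuous_pi fun i => ?_
  fin_cases i
  · exact continuous_fst
  · exact continuous_snd

lemma aux_int (w : ℝ × ℝ → ℝ) (hw : Continuous w) (P Q : MvPolynomial (Fin 2) ℝ) :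
    IntegrableOn (fun q => w q *
      (MvPolynomial.eval ![q.1, q.2] P * MvPolynomial.eval ![q.1, q.2] Q)) auxT :=
  (hw.mul ((aux_eval_cont P).mul (aux_eval_cont Q))).continuousOn.integrableOn_compact auxT_compact

noncomputable def auxB (w : ℝ × ℝ → ℝ) (hw : Continuous w) :
    MvPolynomial (Fin 2) ℝ →ₗ[ℝ] MvPolynomial (Fin 2) ℝ →ₗ[ℝ] ℝ :=
  LinearMap.mk₂ ℝ (fun P Q => ∫ q in auxT, w q *
      (MvPolynomial.eval ![q.1, q.2] P * MvPolynomial.eval ![q.1, q.2] Q))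
    (fun P P' Q => by
      rw [← integral_add (aux_int w hw P Q) (aux_int w hw P' Q)]
      congr 1; ext q; rw [map_add]; ring)
    (fun c P Q => by
      rw [smul_eq_mul, ← integral_const_mul]
      congr 1; ext q; rw [MvPolynomial.smul_eval]; ring)
    (fun P Q Q' => by
      rw [← integral_add (aux_int w hw P Q) (aux_int w hw P Q')]
      congr 1; ext q; rw [map_add]; ring)
    (fun c P Q => by
      rw [smul_eq_mul, ← integral_const_mul]
      congr 1; ext q; rw [MvPolynomial.smul_eval]; ring)

def auxb (q : ℝ × ℝ) : ℝ := q.1 * q.2 * (1 - q.1 - q.2)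

lemma auxb_cont : Continuous auxb := by unfold auxb; fun_prop

lemma auxB_pos (P : MvPolynomial (Fin 2) ℝ) (hP : P ≠ 0) : 0 < auxB auxb auxb_cont P P := by
  change 0 < ∫ q in auxT, auxb q *
      (MvPolynomial.eval ![q.1, q.2] P * MvPolynomial.eval ![q.1, q.2] P)
  obtain ⟨v, hv, hv0⟩ : ∃ v ∈ Set.pi Set.univ (fun _ : Fin 2 => Set.Ioo (0 : ℝ) (1/2)),
      MvPolynomial.eval v P ≠ 0 := by
    by_contra! h
    refine hP (MvPolynomial.funext_set (fun _ : Fin 2 => Set.Ioo (0 : ℝ) (1/2))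
      (fun _ => Set.Ioo_infinite (by norm_num)) ?_)
    intro x hx
    rw [h x hx, map_zero]
  have hvv : v = ![v 0, v 1] := by ext i; fin_cases i <;> rfl
  rw [setIntegral_pos_iff_support_of_nonneg_ae _ (aux_int auxb auxb_cont P P)]
  · let U : Set (ℝ × ℝ) := (Set.Ioo (0 : ℝ) (1/2) ×ˢ Set.Ioo (0 : ℝ) (1/2)) ∩
      {q | MvPolynomial.eval ![q.1, q.2] P ≠ 0}
    have hU : IsOpen U := (isOpen_Ioo.prod isOpen_Ioo).inter
      (isOpen_ne_fun (aux_eval_cont P) continuous_const)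
    have hne : U.Nonempty := by
      refine ⟨(v 0, v 1), ⟨hv 0 trivial, hv 1 trivial⟩, ?_⟩
      change MvPolynomial.eval ![v 0, v 1] P ≠ 0
      rwa [← hvv]
    refine (hU.measure_pos volume hne).trans_le (measure_mono ?_)
    rintro ⟨x, y⟩ ⟨⟨⟨hx0, hx1⟩, ⟨hy0, hy1⟩⟩, hq⟩
    simp only at hx0 hx1 hy0 hy1
    refine ⟨?_, hx0.le, hy0.le, by simp only; linarith⟩
    have : 0 < auxb (x, y) := by
      have : 0 < 1 - x - y := by linarith
      simp only [auxb]; positivity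
    exact mul_ne_zero this.ne' (mul_ne_zero hq hq)
  · refine (ae_restrict_iff' auxT_closed.measurableSet).mpr (Filter.Eventually.of_forall ?_)
    rintro ⟨x, y⟩ ⟨h1, h2, h3⟩
    simp only at h1 h2 h3
    have : 0 ≤ 1 - x - y := by linarith
    have : 0 ≤ auxb (x, y) := by simp only [auxb]; positivity
    exact mul_nonneg this (mul_self_nonneg _)

/-- Interior-bubble norm equivalence on the unit triangle
`T = {(x,y) : x ≥ 0, y ≥ 0, x + y ≤ 1}` with bubble `b(x,y) = xy(1−x−y)`:
for every degree bound `k` there is `C = C(k) > 0` with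
`∫_T P² ≤ C ∫_T b P²` for all real bivariate polynomials `P` of total degree ≤ `k`. -/
theorem stmt_5 (k : ℕ) :
    ∃ C : ℝ, 0 < C ∧ ∀ P : MvPolynomial (Fin 2) ℝ, P.totalDegree ≤ k →
      (∫ q in {p : ℝ × ℝ | 0 ≤ p.1 ∧ 0 ≤ p.2 ∧ p.1 + p.2 ≤ 1},
          (MvPolynomial.eval ![q.1, q.2] P) ^ 2) ≤
        C * ∫ q in {p : ℝ × ℝ | 0 ≤ p.1 ∧ 0 ≤ p.2 ∧ p.1 + p.2 ≤ 1},
          q.1 * q.2 * (1 - q.1 - q.2) * (MvPolynomial.eval ![q.1, q.2] P) ^ 2 := by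
  let V := MvPolynomial.restrictTotalDegree (Fin 2) ℝ k
  let e : V ≃ₗ[ℝ] (Fin (Module.finrank ℝ V) → ℝ) := (Module.finBasis ℝ V).equivFun
  let f : (Fin (Module.finrank ℝ V) → ℝ) →ₗ[ℝ] MvPolynomial (Fin 2) ℝ :=
    V.subtype ∘ₗ e.symm.toLinearMap
  obtain ⟨C, hC, h⟩ := aux_quad _ ((auxB (fun _ => 1) continuous_const).compl₁₂ f f)
    ((auxB auxb auxb_cont).compl₁₂ f f) (by
      intro x hx
      refine auxB_pos _ ?_
      intro h0
      apply hx
      have : e.symm x = 0 := Subtype.ext h0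
      simpa using this)
  refine ⟨C, hC, fun P hP => ?_⟩
  have hPV : P ∈ V := (MvPolynomial.mem_restrictTotalDegree _ _ _).mpr hP
  have hf : f (e ⟨P, hPV⟩) = P := by simp [f]
  have h' := h (e ⟨P, hPV⟩)
  rw [LinearMap.compl₁₂_apply, LinearMap.compl₁₂_apply, hf] at h'
  simpa only [auxB, LinearMap.mk₂_apply, one_mul, ← pow_two, auxb, auxT] using h'
end
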